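/- Let n, k be positive integers with n ≥ k+1, let t = gcd(n, k+1), z = (k+1)/t and α = n/t (so k+1 = zt and n = αt). Let F be a finite field with q > α elements and let β_0, …, β_{α−1} ∈ F be distinct nonzero elements. Define the k×n matrix G blockwise as follows: for row-block index r ∈ {0, …, z−2} (each row block of height t) and column-block index c ∈ {0, …, α−1} (each of width t), the (r,c) block is β_c^r · I_t; the bottom row block (of height t−1) in column block c is C(β_c^{z−1}, β_c^{z−1})_{(t−1)×t}. Then G satisfies the (k,k+1)-consecutive column property. -/

import Mathlib

/-!
Write `k + 1 = z * t` and `n = α * t`. Each window consists of `z` cyclically consecutive column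
blocks, and `z ≤ α`, so the nodes `β` occurring in it are distinct. Invertibility is shown by proving
that a vector in the right kernel of the `k × (k + 1)` window matrix with one vanishing coordinate
is zero. Index its coordinates by (block `b`, position `s`). For every `s` the upper row blocks give
the moment equations of orders `< z - 1` in the variables `u b s`. At the position `s₀` of the
vanishing coordinate only `z - 1` unknowns remain, so the whole slice `u · s₀` vanishes by
Vandermonde. The bottom rows say that the moments of order `z - 1` of neighbouring slices are
opposite, so all of these moments vanish, and Vandermonde (now of size `z`) kills every slice.
The Vandermonde step is `eq_zero_of_moments`, the whole kernel argument is `kernel_eq_zero`.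
-/

/-- The columns (as a function `Fin k → Fin n`) of the window of `k+1` cyclically
consecutive column indices starting at offset `off`, with the `j`-th column of the
window deleted. -/
def windowDel {k n : ℕ} (hn : 0 < n) (off : ℕ) (j : Fin (k + 1)) : Fin k → Fin n :=
  fun m => ⟨(off + ((j.succAbove m : Fin (k + 1)) : ℕ)) % n, Nat.mod_lt _ hn⟩

/-- The least positive integer `z` such that `(k+1) ∣ n * z`. -/
noncomputable def leastZ (k n : ℕ) : ℕ := sInf {z : ℕ | 0 < z ∧ (k + 1) ∣ n * z}

/-- The `(k,k+1)`-consecutive column property: for every window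
`S_a = {(a(k+1)+i) mod n : 0 ≤ i ≤ k}` with `0 ≤ a < n·z/(k+1)` (`z` the least
positive integer with `(k+1) ∣ nz`) and every `j ∈ S_a`, the `k × k` submatrix of `G`
with columns indexed by `S_a \ {j}` is invertible (its determinant is a unit). -/
def CCP {R : Type*} [CommRing R] {k n : ℕ} (hn : 0 < n)
    (G : Matrix (Fin k) (Fin n) R) : Prop :=
  ∀ a : ℕ, a < n * leastZ k n / (k + 1) → ∀ j : Fin (k + 1),
    IsUnit (G.submatrix id (windowDel hn (a * (k + 1)) j)).det

open Finset in
/-- Vandermonde: a weight on at most `m` distinct nodes is determined by its first `m` moments.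
The moments are tested against the polynomial vanishing at all nodes but one. -/
lemma eq_zero_of_moments {F : Type*} [Field F] (S : Finset ℕ) (m : ℕ) (hS : #S ≤ m)
    (g : ℕ → F) (hg : Set.InjOn g S) (v : ℕ → F)
    (h : ∀ r < m, ∑ b ∈ S, g b ^ r * v b = 0) : ∀ b ∈ S, v b = 0 := by
  intro b₁ hb₁
  set p : Polynomial F := ∏ b ∈ S.erase b₁, (Polynomial.X - Polynomial.C (g b)) with hp
  have hdeg : p.natDegree < m := by
    have hpos : 0 < #S := card_pos.2 ⟨b₁, hb₁⟩
    rw [hp, Polynomial.natDegree_finsetProd_X_sub_C_eq_card, card_erase_of_mem hb₁]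
    omega
  have hsum : ∑ b ∈ S, p.eval (g b) * v b = 0 := by
    simp_rw [Polynomial.eval_eq_sum_range, sum_mul]
    rw [sum_comm]
    refine sum_eq_zero fun r hr => ?_
    have hr' : r < m := by
      have := mem_range.1 hr
      omega
    simp_rw [mul_assoc]
    rw [← mul_sum, h r hr', mul_zero]
  rw [sum_eq_single_of_mem b₁ hb₁] at hsum
  · refine (mul_eq_zero.1 hsum).resolve_left ?_
    rw [hp, Polynomial.eval_prod]
    refine prod_ne_zero_iff.2 ?_
    intro b hb
    rw [mem_erase] at hb
    simp only [Polynomial.eval_sub, Polynomial.eval_X, Polynomial.eval_C]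
    exact sub_ne_zero.2 fun e => hb.1 (hg hb.2 hb₁ e.symm)
  · intro b hb hne
    rw [hp, Polynomial.eval_prod, prod_eq_zero (mem_erase.2 ⟨hne, hb⟩) (by simp), zero_mul]

open Finset in
/-- A solution `u b s` (block `b`, position `s`) of the row equations of a window that has one
vanishing coordinate is zero. -/
lemma kernel_eq_zero {F : Type*} [Field F] (z t : ℕ) (g : ℕ → F)
    (hg : Set.InjOn g (range z)) (u : ℕ → ℕ → F)
    (h₁ : ∀ r < z - 1, ∀ s < t, ∑ b ∈ range z, g b ^ r * u b s = 0)
    (h₂ : ∀ s, s + 1 < t → ∑ b ∈ range z, g b ^ (z - 1) * (u b s + u b (s + 1)) = 0)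
    (b₀ s₀ : ℕ) (hb₀ : b₀ < z) (hs₀ : s₀ < t) (hu : u b₀ s₀ = 0) :
    ∀ b < z, ∀ s < t, u b s = 0 := by
  have hslice : ∀ b < z, u b s₀ = 0 := by
    intro b hb
    by_cases hbb : b = b₀
    · rw [hbb, hu]
    refine eq_zero_of_moments ((range z).erase b₀) (z - 1) ?_ g
      (hg.mono (by exact_mod_cast erase_subset _ _)) (fun b => u b s₀) ?_ b ?_
    · rw [card_erase_of_mem (mem_range.2 hb₀), card_range]
    · intro r hr
      rw [sum_erase _ (by rw [hu, mul_zero])]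
      exact h₁ r hr s₀ hs₀
    · exact mem_erase.2 ⟨hbb, mem_range.2 hb⟩
  have hw₀ : ∑ b ∈ range z, g b ^ (z - 1) * u b s₀ = 0 :=
    sum_eq_zero fun b hb => by rw [hslice b (mem_range.1 hb), mul_zero]
  have hstep : ∀ s, s + 1 < t → ∑ b ∈ range z, g b ^ (z - 1) * u b s
      + ∑ b ∈ range z, g b ^ (z - 1) * u b (s + 1) = 0 := by
    intro s hs
    rw [← sum_add_distrib, ← h₂ s hs]
    exact sum_congr rfl fun b _ => (mul_add _ _ _).symm
  -- The top moment vanishes at one position iff it vanishes at position `0`.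
  have hiff : ∀ s, s < t → (∑ b ∈ range z, g b ^ (z - 1) * u b s = 0 ↔
      ∑ b ∈ range z, g b ^ (z - 1) * u b 0 = 0) := by
    intro s
    induction s with
    | zero => intro _; rfl
    | succ s ih =>
      intro hs
      have h := hstep s hs
      rw [← ih (by omega)]
      constructor <;> intro h' <;> rw [h'] at h <;> simpa using h
  intro b hb s hs
  refine eq_zero_of_moments (range z) z (by simp) g hg (fun b => u b s) ?_ b (mem_range.2 hb)
  intro r hr
  rcases Nat.lt_or_ge r (z - 1) with h | h
  · exact h₁ r h s hs
  · obtain rfl : r = z - 1 := by omega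
    exact (hiff s hs).2 ((hiff s₀ hs₀).1 hw₀)

open Finset in
lemma sum_range_mul_blocks {M : Type*} [AddCommMonoid M] (f : ℕ → M) (z t : ℕ) :
    ∑ i ∈ range (z * t), f i = ∑ b ∈ range z, ∑ c ∈ range t, f (b * t + c) := by
  induction z with
  | zero => simp
  | succ z ih => rw [Nat.succ_mul, sum_range_add, ih, sum_range_succ]

lemma window_index (a b c z t α : ℕ) (hα : 0 < α) (hc : c < t) :
    (a * (z * t) + (b * t + c)) % (α * t) = (a * z + b) % α * t + c := by
  have h : a * (z * t) + (b * t + c)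
      = ((a * z + b) % α * t + c) + (α * t) * ((a * z + b) / α) := by
    conv_lhs => rw [show a * (z * t) + (b * t + c) = (a * z + b) * t + c by ring,
      ← Nat.mod_add_div (a * z + b) α]
    ring
  rw [h, Nat.add_mul_mod_self_left, Nat.mod_eq_of_lt]
  have h₁ : (a * z + b) % α + 1 ≤ α := Nat.mod_lt _ hα
  nlinarith [Nat.mul_le_mul_right t h₁]

/-- the blockwise Vandermonde construction.  With `t = gcd(n, k+1)`,
`z = (k+1)/t`, `α = n/t`, and `β 0, …, β (α-1)` distinct nonzero elements of a field
`F` with more than `α` elements, the `k × n` matrix whose `(r,c)` block (of size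
`t × t` for row blocks `r ≤ z-2`, and `(t-1) × t` for the bottom row block) is
`β_c^r · I_t`, resp. `C(β_c^{z-1}, β_c^{z-1})_{(t-1)×t}`, satisfies the
`(k,k+1)`-consecutive column property. -/
theorem stmt_9 {n k t z α : ℕ} (F : Type*) [Field F] [Fintype F]
    (hk : 1 ≤ k) (hkn : k + 1 ≤ n) (hn0 : 0 < n)
    (ht : t = Nat.gcd n (k + 1)) (hz : z = (k + 1) / t) (hα : α = n / t)
    (hq : α < Fintype.card F)
    (β : Fin α → F) (hβ0 : ∀ i, β i ≠ 0) (hβinj : Function.Injective β)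
    (G : Matrix (Fin k) (Fin n) F)
    (hG : ∀ (rb : Fin z) (cb : Fin α) (ri ci : Fin t)
        (hr : (rb : ℕ) * t + (ri : ℕ) < k) (hc : (cb : ℕ) * t + (ci : ℕ) < n),
      G ⟨(rb : ℕ) * t + (ri : ℕ), hr⟩ ⟨(cb : ℕ) * t + (ci : ℕ), hc⟩ =
        if (rb : ℕ) < z - 1 then
          β cb ^ (rb : ℕ) * (if (ri : ℕ) = (ci : ℕ) then 1 else 0)
        else
          β cb ^ (z - 1) *
            (if (ci : ℕ) = (ri : ℕ) ∨ (ci : ℕ) = (ri : ℕ) + 1 then 1 else 0)) :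
    CCP hn0 G := by
  have htpos : 0 < t := ht ▸ Nat.gcd_pos_of_pos_left _ hn0
  have hkz : k + 1 = z * t := by
    rw [hz, Nat.div_mul_cancel (ht ▸ Nat.gcd_dvd_right _ _)]
  have hnα : n = α * t := by
    rw [hα, Nat.div_mul_cancel (ht ▸ Nat.gcd_dvd_left _ _)]
  clear ht hz hα hq
  have hαpos : 0 < α := Nat.pos_of_ne_zero (by rintro rfl; simp at hnα; omega)
  have hzα : z ≤ α := Nat.le_of_mul_le_mul_right (hkz ▸ hnα ▸ hkn) htpos
  intro a _ j
  rw [isUnit_iff_ne_zero]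
  intro hdet
  obtain ⟨w, hne, hker⟩ := Matrix.exists_mulVec_eq_zero_iff.2 hdet
  -- `v` is a kernel vector of the whole window with `v j = 0`; `u` extends it by zero to `ℕ`.
  set v : Fin (k + 1) → F := Fin.insertNth j 0 w with hv
  set u : ℕ → F := fun i => if h : i < k + 1 then v ⟨i, h⟩ else 0 with hu
  have huv : ∀ i : Fin (k + 1), u i = v i := fun i => dif_pos i.2
  have hrow : ∀ r : Fin k, ∑ i ∈ Finset.range (z * t),
      G r ⟨(a * (k + 1) + i) % n, Nat.mod_lt _ hn0⟩ * u i = 0 := by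
    intro r
    rw [← hkz, Finset.sum_range, Fin.sum_univ_succAbove _ j]
    have := congrFun hker r
    simp only [Matrix.mulVec, dotProduct, Matrix.submatrix_apply, id, windowDel,
      Pi.zero_apply] at this
    simp only [huv]
    simpa [hv] using this
  set g : ℕ → F := fun b => β ⟨(a * z + b) % α, Nat.mod_lt _ hαpos⟩ with hgdef
  have hg : Set.InjOn g (Finset.range z) := by
    intro b hb b' hb' h
    have hb : b < z := by simpa using hb
    have hb' : b' < z := by simpa using hb'
    have h : (a * z + b) % α = (a * z + b') % α := congrArg Fin.val (hβinj h)
    exact (Nat.ModEq.add_left_cancel' (a * z) h).eq_of_lt_of_lt (by omega) (by omega)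
  have hrow' : ∀ rb < z, ∀ ri < t, rb * t + ri < k →
      ∑ b ∈ Finset.range z, ∑ c ∈ Finset.range t,
        (if rb < z - 1 then g b ^ rb * (if ri = c then 1 else 0)
          else g b ^ (z - 1) * (if c = ri ∨ c = ri + 1 then 1 else 0)) * u (b * t + c) = 0 := by
    intro rb hrb ri hri hr
    refine Eq.trans ?_ (hrow ⟨rb * t + ri, hr⟩)
    rw [sum_range_mul_blocks]
    refine Finset.sum_congr rfl fun b _ => Finset.sum_congr rfl fun c hc => ?_
    have hc : c < t := Finset.mem_range.1 hc
    have hidx : (a * (k + 1) + (b * t + c)) % n = (a * z + b) % α * t + c := by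
      rw [hkz, hnα, window_index _ _ _ _ _ _ hαpos hc]
    have hlt : (a * z + b) % α * t + c < n := hidx ▸ Nat.mod_lt _ hn0
    have key := hG ⟨rb, hrb⟩ ⟨(a * z + b) % α, Nat.mod_lt _ hαpos⟩ ⟨ri, hri⟩ ⟨c, hc⟩ hr hlt
    simp only [hidx]
    rw [key]
  -- The last row of the bottom block (`ri = t - 1`) is missing from `G`.
  have hlast : ∀ rb < z, ∀ ri < t, rb < z - 1 ∨ ri + 1 < t → rb * t + ri < k := by
    intro rb hrb ri hri h
    have h₁ : (rb + 1) * t ≤ z * t := Nat.mul_le_mul_right t hrb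
    rw [Nat.add_mul] at h₁
    rcases h with h | h
    · have h₂ : (rb + 2) * t ≤ z * t := Nat.mul_le_mul_right t (by omega)
      rw [Nat.add_mul] at h₂
      omega
    · omega
  have hj : (j : ℕ) < z * t := hkz ▸ j.2
  have hjt : (j : ℕ) / t * t + (j : ℕ) % t = j := Nat.div_add_mod' _ _
  have hall := kernel_eq_zero z t g hg (fun b s => u (b * t + s)) ?_ ?_ ((j : ℕ) / t)
    ((j : ℕ) % t) (Nat.div_lt_of_lt_mul (by rwa [mul_comm])) (Nat.mod_lt _ htpos)
    (by simp [hjt, huv, hv])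
  · refine hne (funext fun m => ?_)
    have hm : ((j.succAbove m : Fin (k + 1)) : ℕ) < z * t := hkz ▸ (j.succAbove m).2
    have := hall ((j.succAbove m : ℕ) / t) (Nat.div_lt_of_lt_mul (by rwa [mul_comm]))
      ((j.succAbove m : ℕ) % t) (Nat.mod_lt _ htpos)
    simpa [Nat.div_add_mod', huv, hv] using this
  · intro r hr s hs
    rw [← hrow' r (by omega) s hs (hlast r (by omega) s hs (Or.inl hr))]
    refine Finset.sum_congr rfl fun b _ => ?_
    simp [hr, hs]
  · intro s hs
    have hzpos : 0 < z := Nat.pos_of_ne_zero (by rintro rfl; simp at hkz)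
    rw [← hrow' (z - 1) (by omega) s (by omega)
      (hlast (z - 1) (by omega) s (by omega) (Or.inr hs))]
    refine Finset.sum_congr rfl fun b _ => ?_
    have hsplit : ∀ c : ℕ, (if c = s ∨ c = s + 1 then (1 : F) else 0)
        = (if s = c then 1 else 0) + (if s + 1 = c then 1 else 0) := by
      intro c
      by_cases h₁ : c = s
      · subst h₁; simp
      · by_cases h₂ : c = s + 1
        · subst h₂; simp
        · simp [h₁, h₂, Ne.symm h₁, Ne.symm h₂]
    simp only [lt_irrefl, if_false, hsplit, mul_add, add_mul, Finset.sum_add_distrib]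
    simp [hs, Nat.lt_of_succ_lt hs]
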